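/- Let B be a countable Boolean algebra that is not hereditary atomic, i.e., B has a Boolean subalgebra that is not atomic. Then the set of ultrafilters of B has cardinality 2^ℵ₀. -/

import Mathlib

/-- A Boolean subalgebra of `B`, as a subset. -/
def IsBoolSubalgebra {B : Type*} [BooleanAlgebra B] (C : Set B) : Prop :=
  ⊤ ∈ C ∧ ⊥ ∈ C ∧ (∀ x ∈ C, ∀ y ∈ C, x ⊓ y ∈ C) ∧
    (∀ x ∈ C, ∀ y ∈ C, x ⊔ y ∈ C) ∧ (∀ x ∈ C, xᶜ ∈ C)

/-- The subalgebra carried by the subset `C` is atomic: below every nonzero element of `C`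
there is a minimal nonzero element of `C`. -/
def SubalgAtomic {B : Type*} [BooleanAlgebra B] (C : Set B) : Prop :=
  ∀ x ∈ C, x ≠ ⊥ → ∃ a ∈ C, a ≠ ⊥ ∧ (∀ y ∈ C, y ≤ a → y = ⊥ ∨ y = a) ∧ a ≤ x

/-- An ultrafilter of a Boolean algebra, as a set. -/
def IsBoolUltrafilter {B : Type*} [BooleanAlgebra B] (F : Set B) : Prop :=
  ⊤ ∈ F ∧ ⊥ ∉ F ∧ (∀ x ∈ F, ∀ y : B, x ≤ y → y ∈ F) ∧
    (∀ x ∈ F, ∀ y ∈ F, x ⊓ y ∈ F) ∧ (∀ x : B, x ∈ F ∨ xᶜ ∈ F)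

/-!
Below an element witnessing that a subalgebra is not atomic, every nonzero element of the subalgebra
splits into two disjoint nonzero ones. Splitting repeatedly yields a binary tree of nonzero
elements. Each infinite branch is a decreasing sequence, hence lies in an ultrafilter, and distinct
branches contain disjoint elements, so their ultrafilters differ.
-/

/-- The points of the Stone space of `B`, with ultrafilters encoded as sets of elements. -/
abbrev BoolUltrafilter (B : Type*) [BooleanAlgebra B] : Type _ :=
  {F : Set B // IsBoolUltrafilter F}

/-- The basic clopen subset of the Stone space attached to `a`. -/
def stoneClopen {B : Type*} [BooleanAlgebra B] (a : B) : Set (BoolUltrafilter B) :=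
  {F | a ∈ F.1}

/-- A set is splitting if below each of its elements it contains two disjoint elements. For sets
avoiding `⊥` this is what makes it possible to grow a binary tree. -/
def IsSplitting {α : Type*} [PartialOrder α] [OrderBot α] (S : Set α) : Prop :=
  ∀ a ∈ S, ∃ b ∈ S, ∃ c ∈ S, b ≤ a ∧ c ≤ a ∧ Disjoint b c

section

variable {B : Type*} [BooleanAlgebra B]

theorem isBoolUltrafilter_compl_of_isPrime {I : Order.Ideal B} (hI : I.IsPrime) :
    IsBoolUltrafilter (I : Set B)ᶜ := by
  have proper := hI.toIsProper
  exact ⟨proper.top_notMem, not_not_intro I.bot_mem, fun x hx y hxy hy ↦ hx (I.lower hxy hy),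
    fun x hx y hy hxy ↦ (hI.mem_or_mem hxy).elim hx hy, fun _ ↦ proper.notMem_or_compl_notMem⟩

theorem exists_isBoolUltrafilter_of_pfilter {F : Order.PFilter B} (hF : ⊥ ∉ F) :
    ∃ U, IsBoolUltrafilter U ∧ (F : Set B) ⊆ U := by
  have disjoint_bot : Disjoint (F : Set B) (⊥ : Order.Ideal B) :=
    Set.disjoint_left.2 fun b hbF hb ↦ hF (le_bot_iff.1 hb ▸ hbF)
  obtain ⟨I, hI, -, hFI⟩ := DistribLattice.prime_ideal_of_disjoint_filter_ideal disjoint_bot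
  exact ⟨_, isBoolUltrafilter_compl_of_isPrime hI, hFI.subset_compl_right⟩

theorem isPFilter_upperClosure {P : Type*} [Preorder P] {S : Set P} (hne : S.Nonempty)
    (hdir : DirectedOn (· ≥ ·) S) : Order.IsPFilter (upperClosure S : Set P) := by
  refine .of_def (hne.mono subset_upperClosure) ?_ fun hxy hx ↦ (upperClosure S).upper hxy hx
  rintro x ⟨a, ha, hax⟩ y ⟨b, hb, hby⟩
  obtain ⟨c, hc, hca, hcb⟩ := hdir a ha b hb
  exact ⟨c, subset_upperClosure hc, hca.trans hax, hcb.trans hby⟩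

theorem exists_isBoolUltrafilter_of_directedOn {S : Set B} (hne : S.Nonempty)
    (hdir : DirectedOn (· ≥ ·) S) (hbot : ⊥ ∉ S) : ∃ U, IsBoolUltrafilter U ∧ S ⊆ U := by
  have bot_notMem : ⊥ ∉ (isPFilter_upperClosure hne hdir).toPFilter := by
    rintro ⟨a, ha, ha_le⟩
    exact hbot (le_bot_iff.1 ha_le ▸ ha)
  obtain ⟨U, hU, hSU⟩ := exists_isBoolUltrafilter_of_pfilter bot_notMem
  exact ⟨U, hU, subset_upperClosure.trans hSU⟩

theorem disjoint_stoneClopen {a b : B} (hab : Disjoint a b) :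
    Disjoint (stoneClopen a) (stoneClopen b) := by
  refine Set.disjoint_left.2 fun ⟨F, _, bot_notMem, _, inf_mem, _⟩ ha hb ↦ bot_notMem ?_
  exact hab.eq_bot ▸ inf_mem a ha b hb

theorem nonempty_iInter_stoneClopen_of_directed {ι : Type*} [Nonempty ι] {a : ι → B}
    (ha : Directed (· ≥ ·) a) (hbot : ∀ i, a i ≠ ⊥) : (⋂ i, stoneClopen (a i)).Nonempty := by
  obtain ⟨U, hU, haU⟩ := exists_isBoolUltrafilter_of_directedOn (Set.range_nonempty a)
    ha.directedOn_range fun ⟨i, hi⟩ ↦ hbot i hi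
  exact ⟨⟨U, hU⟩, Set.mem_iInter.2 fun i ↦ haU ⟨i, rfl⟩⟩

theorem mk_boolUltrafilter_le : Cardinal.mk (BoolUltrafilter B) ≤ 2 ^ Cardinal.mk B :=
  (Cardinal.mk_subtype_le _).trans Cardinal.mk_set.le

theorem exists_tree_of_isSplitting {α : Type*} [PartialOrder α] [OrderBot α] {S : Set α}
    (hS : IsSplitting S) (hne : S.Nonempty) :
    ∃ t : List Bool → α, (∀ l, t l ∈ S) ∧ (∀ l i, t (i :: l) ≤ t l) ∧
      ∀ l, Pairwise fun i j ↦ Disjoint (t (i :: l)) (t (j :: l)) := by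
  have exists_children (a : S) : ∃ c : Bool → S, (∀ i, (c i : α) ≤ a) ∧
      Pairwise fun i j ↦ Disjoint (c i : α) (c j) := by
    obtain ⟨b, hb, c, hc, hba, hca, hbc⟩ := hS a a.2
    refine ⟨fun i ↦ cond i ⟨b, hb⟩ ⟨c, hc⟩, Bool.forall_bool.2 ⟨hca, hba⟩, ?_⟩
    rintro (_ | _) (_ | _) hij
    exacts [absurd rfl hij, hbc.symm, hbc, absurd rfl hij]
  choose child child_le disjoint_child using exists_children
  obtain ⟨root⟩ := hne.to_subtype
  let t : List Bool → S := List.foldr (fun i a ↦ child a i) root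
  exact ⟨fun l ↦ t l, fun l ↦ (t l).2, fun l ↦ child_le (t l), fun l ↦ disjoint_child (t l)⟩

theorem exists_injective_boolUltrafilter_of_tree {β : Type*} {t : List β → B}
    (hbot : ∀ l, t l ≠ ⊥) (hle : ∀ l i, t (i :: l) ≤ t l)
    (hdisj : ∀ l, Pairwise fun i j ↦ Disjoint (t (i :: l)) (t (j :: l))) :
    ∃ f : (ℕ → β) → BoolUltrafilter B, Function.Injective f := by
  let A (l : List β) : Set (BoolUltrafilter B) := stoneClopen (t l)
  have A_disjoint : CantorScheme.Disjoint A := fun l _ _ hij ↦ disjoint_stoneClopen (hdisj l hij)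
  have mem_domain (x : ℕ → β) : x ∈ (CantorScheme.inducedMap A).1 := by
    have branch_antitone : Antitone fun n ↦ t (PiNat.res x n) :=
      antitone_nat_of_succ_le fun n ↦ hle (PiNat.res x n) (x n)
    exact nonempty_iInter_stoneClopen_of_directed branch_antitone.directed_ge fun n ↦ hbot _
  exact ⟨fun x ↦ (CantorScheme.inducedMap A).2 ⟨x, mem_domain x⟩,
    fun _ _ hxy ↦ congrArg Subtype.val (A_disjoint.map_injective hxy)⟩

theorem two_power_aleph0_le_mk_boolUltrafilter_of_isSplitting {S : Set B}
    (hS : IsSplitting S) (hne : S.Nonempty) (hbot : ⊥ ∉ S) :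
    2 ^ Cardinal.aleph0 ≤ Cardinal.mk (BoolUltrafilter B) := by
  obtain ⟨t, ht, hle, hdisj⟩ := exists_tree_of_isSplitting hS hne
  obtain ⟨f, hf⟩ := exists_injective_boolUltrafilter_of_tree
    (fun l ↦ ne_of_mem_of_not_mem (ht l) hbot) hle hdisj
  simpa using Cardinal.lift_mk_le_lift_mk_of_injective hf

theorem exists_isSplitting_of_not_subalgAtomic {C : Set B} (hC : IsBoolSubalgebra C)
    (hna : ¬ SubalgAtomic C) : ∃ S : Set B, IsSplitting S ∧ S.Nonempty ∧ ⊥ ∉ S := by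
  obtain ⟨-, -, inf_mem, -, compl_mem⟩ := hC
  unfold SubalgAtomic at hna
  push Not at hna
  obtain ⟨x, hxC, hx, no_atom⟩ := hna
  refine ⟨{a ∈ C | a ≠ ⊥ ∧ a ≤ x}, ?_, ⟨x, hxC, hx, le_rfl⟩, fun h ↦ h.2.1 rfl⟩
  rintro a ⟨haC, ha, hax⟩
  obtain ⟨y, hyC, hya, hy, hya_ne⟩ : ∃ y ∈ C, y ≤ a ∧ y ≠ ⊥ ∧ y ≠ a := by
    by_contra! h
    exact no_atom a haC ha (fun y hyC hya ↦ or_iff_not_imp_left.2 (h y hyC hya)) hax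
  have sdiff_mem : a \ y ∈ C := sdiff_eq (x := a) ▸ inf_mem a haC yᶜ (compl_mem y hyC)
  have sdiff_ne_bot : a \ y ≠ ⊥ := fun h ↦ hya_ne (hya.antisymm (sdiff_eq_bot_iff.1 h))
  exact ⟨y, ⟨hyC, hy, hya.trans hax⟩, a \ y, ⟨sdiff_mem, sdiff_ne_bot, sdiff_le.trans hax⟩,
    hya, sdiff_le, disjoint_sdiff_self_right⟩

end

theorem not_hereditary_atomic_continuum_many_ultrafilters {B : Type*} [BooleanAlgebra B]
    [Countable B] (hC : ∃ C : Set B, IsBoolSubalgebra C ∧ ¬ SubalgAtomic C) :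
    Cardinal.mk {F : Set B // IsBoolUltrafilter F} = 2 ^ Cardinal.aleph0 := by
  obtain ⟨C, hC, hna⟩ := hC
  obtain ⟨S, hS, hne, hbot⟩ := exists_isSplitting_of_not_subalgAtomic hC hna
  refine le_antisymm (mk_boolUltrafilter_le.trans ?_)
    (two_power_aleph0_le_mk_boolUltrafilter_of_isSplitting hS hne hbot)
  exact Cardinal.power_le_power_left two_ne_zero Cardinal.mk_le_aleph0
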